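/- Let D_in be a type, φ : D_in → Π i : Fin m, Fin (k i) a valuation function with k i ≤ S for all i (S ≥ 2), fix 1 ≤ γ ≤ m, a category index i₀, and a set E of at most two elements of category i₀. Suppose D_test ⊆ D_in covers every γ-way combination (A, v) whose value at i₀ (if i₀ ∈ A) does not lie in E, and suppose every γ-way combination is realizable in D_in. Then there exists a finite set D' ⊆ D_in with cardinality at most (m choose γ−1) · S^γ such that D_test ∪ D' satisfies full γ-way combinatorial coverage: for every set A ⊆ Fin m of cardinality γ and every assignment v of an element to each i ∈ A, some test case in D_test ∪ D' realizes (A, v). -/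

import Mathlib

/-!
Only the combinations `(A, v)` with `i₀ ∈ A` and `v i₀ ∈ E` can have lost their coverage, and one
new test case suffices for each of them. There are `(m - 1 choose γ - 1)` sets `A` of `γ` categories
containing `i₀`, and for each of them at most `|E| * S ^ (γ - 1)` assignments `v` with `v i₀ ∈ E`.
As `|E| ≤ 2 ≤ S`, this is at most `(m choose γ - 1) * S ^ γ`.
-/

section

open Finset

variable {ι X C : Type*} {α : ι → Type*}

theorem exists_finset_card_le_forall_exists_rel (R : X → C → Prop) (s : Finset C) :
    ∃ D : Finset X, #D ≤ #s ∧ ∀ c ∈ s, (∃ x, R x c) → ∃ x ∈ D, R x c := by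
  classical
  choose f hf using fun c : {c // ∃ x, R x c} ↦ c.2
  refine ⟨(s.subtype fun c ↦ ∃ x, R x c).image f, ?_, fun c hc hR ↦ ?_⟩
  · exact card_image_le.trans ((card_subtype _ s).trans_le (card_filter_le _ _))
  · exact ⟨f ⟨c, hR⟩, mem_image_of_mem f (mem_subtype.mpr hc), hf ⟨c, hR⟩⟩

theorem card_filter_mem_powersetCard_univ [Fintype ι] [DecidableEq ι] (i₀ : ι) {γ : ℕ}
    (hγ : 1 ≤ γ) :
    #{A ∈ powersetCard γ univ | i₀ ∈ A} = (Fintype.card ι - 1).choose (γ - 1) := by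
  simpa only [singleton_subset_iff, card_singleton, card_univ] using
    card_filter_powersetCard_subset {i₀} univ γ (subset_univ _) hγ

theorem card_filter_apply_mem [Fintype ι] [DecidableEq ι] [∀ i, Fintype (α i)]
    (i₀ : ι) (E : Finset (α i₀)) [DecidablePred fun v : ∀ i, α i ↦ v i₀ ∈ E] :
    #{v : ∀ i, α i | v i₀ ∈ E} = #E * ∏ i ∈ univ.erase i₀, Fintype.card (α i) := by
  classical
  calc #{v : ∀ i, α i | v i₀ ∈ E}
      = #(Fintype.piFinset (Function.update (fun _ ↦ univ) i₀ E)) := by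
        rw [Fintype.piFinset_update_eq_filter_piFinset_mem _ _ (subset_univ E),
          Fintype.piFinset_univ]
        congr! -- the two sides differ in their `DecidablePred` instances only
    _ = ∏ i, #(Function.update (fun _ ↦ univ) i₀ E i) := Fintype.card_piFinset _
    _ = #E * ∏ i ∈ univ.erase i₀, Fintype.card (α i) := by
        rw [← mul_prod_erase _ _ (mem_univ i₀), Function.update_self]
        congr 1
        refine prod_congr rfl fun i hi ↦ ?_
        rw [Function.update_of_ne (ne_of_mem_erase hi), card_univ]

/-- A partial combination `(A, v)`: a finite set `A` of categories together with a choice `v` of an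
element of each category in `A`. It is a `γ`-way combination if `A` has `γ` members. -/
abbrev PartialCombination (α : ι → Type*) :=
  Σ A : Finset ι, ∀ i : A, α i

namespace PartialCombination

/-- The input `x` realizes the partial combination `c` under the valuation function `φ`. A
combination is realizable if some `x` realizes it, and a set of test cases covers it if some member
of the set realizes it. -/
def Realizes (φ : X → ∀ i, α i) (x : X) (c : PartialCombination α) : Prop :=
  ∀ i : c.1, φ x i = c.2 i

variable [Fintype ι] [∀ i, Fintype (α i)]

open Classical in
/-- The `γ`-way combinations whose value at the refined category `i₀` is one of the new elements
`E`: those which the test cases may fail to cover after the refinement. -/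
noncomputable def refined (γ : ℕ) (i₀ : ι) (E : Finset (α i₀)) : Finset (PartialCombination α) :=
  Finset.sigma {A ∈ powersetCard γ univ | i₀ ∈ A} fun A ↦ {v | ∃ h : i₀ ∈ A, v ⟨i₀, h⟩ ∈ E}

theorem mem_refined {γ : ℕ} {i₀ : ι} {E : Finset (α i₀)} {c : PartialCombination α} :
    c ∈ refined γ i₀ E ↔ #c.1 = γ ∧ ∃ h : i₀ ∈ c.1, c.2 ⟨i₀, h⟩ ∈ E := by
  simp only [refined, mem_sigma, mem_filter, mem_powersetCard_univ, mem_univ, true_and, and_assoc]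
  exact and_congr_right fun _ ↦ and_iff_right_of_imp Exists.fst

theorem card_refined_le {S γ : ℕ} (hα : ∀ i, Fintype.card (α i) ≤ S) (hγ : 1 ≤ γ)
    (i₀ : ι) (E : Finset (α i₀)) :
    #(refined γ i₀ E) ≤ (Fintype.card ι - 1).choose (γ - 1) * (#E * S ^ (γ - 1)) := by
  classical
  rw [refined, card_sigma, ← card_filter_mem_powersetCard_univ i₀ hγ]
  refine sum_le_card_nsmul _ _ _ fun A hA ↦ ?_
  obtain ⟨hAγ, hi₀⟩ : #A = γ ∧ i₀ ∈ A := by simpa using hA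
  let j₀ : A := ⟨i₀, hi₀⟩
  have hcard : #(univ.erase j₀) = γ - 1 := by
    rw [card_erase_of_mem (mem_univ _), card_univ, Fintype.card_coe, hAγ]
  calc #{v : ∀ i : A, α i | ∃ h : i₀ ∈ A, v ⟨i₀, h⟩ ∈ E}
      = #{v : ∀ i : A, α i | v j₀ ∈ E} := by simp only [hi₀, exists_true_left, j₀]
    _ = #E * ∏ i ∈ univ.erase j₀, Fintype.card (α i) :=
        card_filter_apply_mem (α := fun i : A ↦ α i) j₀ E
    _ ≤ #E * S ^ (γ - 1) := by
        rw [← hcard]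
        exact Nat.mul_le_mul_left _ (prod_le_pow_card _ _ _ fun i _ ↦ hα i)

end PartialCombination

open PartialCombination

theorem stmt_14_general [Fintype ι] [∀ i, Fintype (α i)] {S γ : ℕ}
    (hα : ∀ i, Fintype.card (α i) ≤ S) (hγ : 1 ≤ γ) (φ : X → ∀ i, α i)
    (i₀ : ι) (E : Finset (α i₀)) (T : Set X)
    (hT : ∀ c : PartialCombination α, #c.1 = γ → (∃ x, Realizes φ x c) →
      (∀ h : i₀ ∈ c.1, c.2 ⟨i₀, h⟩ ∉ E) → ∃ x ∈ T, Realizes φ x c) :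
    ∃ D : Finset X, #D ≤ (Fintype.card ι - 1).choose (γ - 1) * (#E * S ^ (γ - 1)) ∧
      ∀ c : PartialCombination α, #c.1 = γ → (∃ x, Realizes φ x c) →
        ∃ x ∈ T ∪ D, Realizes φ x c := by
  obtain ⟨D, hDcard, hD⟩ :=
    exists_finset_card_le_forall_exists_rel (Realizes φ) (refined γ i₀ E)
  refine ⟨D, hDcard.trans (card_refined_le hα hγ i₀ E), fun c hcγ hc ↦ ?_⟩
  by_cases hcE : ∃ h : i₀ ∈ c.1, c.2 ⟨i₀, h⟩ ∈ E
  · obtain ⟨x, hxD, hx⟩ := hD c (mem_refined.mpr ⟨hcγ, hcE⟩) hc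
    exact ⟨x, .inr hxD, hx⟩
  · obtain ⟨x, hxT, hx⟩ := hT c hcγ hc (not_exists.mp hcE)
    exact ⟨x, .inl hxT, hx⟩

theorem choose_pred_mul_mul_pow_pred_le {m S γ e : ℕ} (hγ : 1 ≤ γ) (he : e ≤ S) :
    (m - 1).choose (γ - 1) * (e * S ^ (γ - 1)) ≤ m.choose (γ - 1) * S ^ γ := by
  rw [← mul_pow_sub_one (Nat.one_le_iff_ne_zero.mp hγ) S]
  gcongr
  exact Nat.sub_le m 1

end

/-- If `D_test` covers all γ-way combinations except possibly
those whose value at the refined category `i₀` lies in a set `E` of at most two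
elements, and every γ-way combination is realizable, then at most
`(m choose γ-1) * S^γ` additional test cases restore full γ-way coverage. -/
theorem stmt_14 {D_in : Type*} [DecidableEq D_in] (m S γ : ℕ) (hS : 2 ≤ S) (k : Fin m → ℕ)
    (hk : ∀ i, k i ≤ S) (hγ1 : 1 ≤ γ) (hγm : γ ≤ m)
    (φ : D_in → ∀ i : Fin m, Fin (k i))
    (i₀ : Fin m) (E : Finset (Fin (k i₀))) (hE : E.card ≤ 2)
    (D_test : Finset D_in)
    (hcov : ∀ A : Finset (Fin m), A.card = γ → ∀ v : ∀ i : A, Fin (k i),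
      (∀ h : i₀ ∈ A, v ⟨i₀, h⟩ ∉ E) →
      ∃ x ∈ D_test, ∀ i : A, φ x i = v i)
    (hreal : ∀ A : Finset (Fin m), A.card = γ → ∀ v : ∀ i : A, Fin (k i),
      ∃ x : D_in, ∀ i : A, φ x i = v i) :
    ∃ D' : Finset D_in,
      D'.card ≤ Nat.choose m (γ - 1) * S ^ γ ∧
      ∀ A : Finset (Fin m), A.card = γ → ∀ v : ∀ i : A, Fin (k i),
        ∃ x ∈ D_test ∪ D', ∀ i : A, φ x i = v i := by
  obtain ⟨D', hcard, hD'⟩ := stmt_14_general (by simpa using hk) hγ1 φ i₀ E (D_test : Set D_in)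
    fun c hc _ ↦ hcov c.1 hc c.2
  rw [Fintype.card_fin] at hcard
  refine ⟨D', hcard.trans (choose_pred_mul_mul_pow_pred_le hγ1 (hE.trans hS)), fun A hA v ↦ ?_⟩
  simpa only [← Finset.mem_coe, Finset.coe_union, PartialCombination.Realizes] using
    hD' ⟨A, v⟩ hA (hreal A hA v)
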